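/- arXiv:2509.02501 — 3 statements merged into one kernel-verified Lean document; each statement's English description precedes it below -/
import Mathlib

section
/- Let n ≥ 1 be an integer and let ρ be an irreducible finite-dimensional complex representation of SL(2, ℤ/nℤ). If ρ(t) has exactly two distinct eigenvalues, then ρ is two-dimensional. -/
/-- The group `SL(2, ℤ/nℤ)`. -/
abbrev SL2 (n : ℕ) := Matrix.SpecialLinearGroup (Fin 2) (ZMod n)

/-- The element `t = [[1,1],[0,1]]` of `SL(2, ℤ/nℤ)`. -/
def tGen (n : ℕ) : SL2 n := ⟨!![1, 1; 0, 1], by simp [Matrix.det_fin_two_of]⟩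

/-- A representation is irreducible if the space is nonzero and the only invariant
subspaces are `⊥` and `⊤`. -/
def IsIrreducibleRep {G V : Type} [Group G] [AddCommGroup V] [Module ℂ V]
    (ρ : Representation ℂ G V) : Prop :=
  Nontrivial V ∧ ∀ p : Submodule ℂ V, (∀ g : G, p.map (ρ g) ≤ p) → p = ⊥ ∨ p = ⊤


/-
With `s = [[1,0],[-1,1]]`, the group `SL(2, ℤ/nℤ)` is generated by `s` and `t`, which satisfy the
braid relation `sts = tst` and are therefore conjugate. So `A = ρ(t)` and `B = ρ(s)` have the same
two eigenvalues `a`, `b`, and, being of finite order, are both annihilated by `(X - a)(X - b)`.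
Choose `v ≠ 0` with `Av = av` and put `w = Bv - av`. Then `Bw = bw`, and the braid relation applied
to `v` gives `BAw = aAw - a²w`, so the span of `w` and `Aw` is invariant under `A` and `B`. By
irreducibility it is the whole space; `w` and `Aw` are linearly independent, because a common
eigenvector of `A` and `B` would make `A` a scalar.
-/

open Polynomial Module Matrix.SpecialLinearGroup
open scoped MatrixGroups

theorem exists_isUnit_add_mul_of_isCoprime {R : Type*} [CommRing R] [Finite (MaximalSpectrum R)]
    {a c : R} (h : IsCoprime a c) : ∃ x, IsUnit (a + x * c) := by
  classical
  obtain ⟨x, hx⟩ := Ideal.exists_forall_sub_mem_ideal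
    (I := fun m : MaximalSpectrum R ↦ m.asIdeal)
    (fun m m' hne ↦ Ideal.isCoprime_of_isMaximal fun he ↦ hne (MaximalSpectrum.ext he))
    (fun m ↦ if a ∈ m.asIdeal then 1 else 0)
  refine ⟨x, by_contra fun hu ↦ ?_⟩
  obtain ⟨M, hM, hmem⟩ := exists_max_ideal_of_mem_nonunits (mem_nonunits_iff.mpr hu)
  have hxM := hx ⟨M, hM⟩
  by_cases ha : a ∈ M
  · simp only [ha, if_true] at hxM
    have hc : c ∈ M := by
      have hxc := (M.add_mem_iff_right ha).mp hmem
      simpa [sub_mul] using M.sub_mem hxc (M.mul_mem_right c hxM)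
    obtain ⟨u, v, huv⟩ := h
    exact M.ne_top_iff_one.mp hM.ne_top
      (huv ▸ M.add_mem (M.mul_mem_left u ha) (M.mul_mem_left v hc))
  · simp only [ha, if_false, sub_zero] at hxM
    exact ha ((M.add_mem_iff_left (M.mul_mem_right c hxM)).mp hmem)

section Transvection

variable {ι R : Type*} [DecidableEq ι] [Fintype ι] [CommRing R] {i j : ι} (hij : i ≠ j)

theorem transvection_mul_apply_same (b : R) (g : Matrix.SpecialLinearGroup ι R) (k : ι) :
    (transvection hij b * g) i k = g i k + b * g j k :=
  Matrix.transvection_mul_apply_same i j k b g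

theorem transvection_mul_apply_of_ne {l : ι} (hl : l ≠ i) (b : R)
    (g : Matrix.SpecialLinearGroup ι R) (k : ι) : (transvection hij b * g) l k = g l k :=
  Matrix.transvection_mul_apply_of_ne i j l k hl b g

theorem transvection_pow (b : R) (k : ℕ) : transvection hij b ^ k = transvection hij (k * b) := by
  induction k with
  | zero => simp
  | succ k ih => rw [pow_succ, ih, ← transvection_add]; push_cast; ring_nf

theorem transvection_mem_of_transvection_one_mem {n : ℕ} [NeZero n]
    {H : Subgroup (Matrix.SpecialLinearGroup ι (ZMod n))} (h : transvection hij 1 ∈ H)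
    (x : ZMod n) : transvection hij x ∈ H := by
  simpa [transvection_pow] using H.pow_mem h x.val

end Transvection

section SL2

variable {R : Type*} [CommRing R]

theorem eq_transvection_of_first_column {g : SL(2, R)} (h₀ : g 0 0 = 1) (h₁ : g 1 0 = 0) :
    g = transvection zero_ne_one (g 0 1) := by
  have hdet := g.det_coe
  rw [Matrix.det_fin_two, h₀, h₁] at hdet
  ext i j
  fin_cases i <;> fin_cases j <;> simp_all [transvection_coe]

theorem eq_top_of_transvection_mem [Finite (MaximalSpectrum R)] {H : Subgroup SL(2, R)}
    (hU : ∀ x, transvection zero_ne_one x ∈ H) (hL : ∀ x, transvection one_ne_zero x ∈ H) :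
    H = ⊤ := by
  refine H.eq_top_iff'.mpr fun g ↦ ?_
  obtain ⟨x, u, hu⟩ := exists_isUnit_add_mul_of_isCoprime (g.isCoprime_col 0)
  -- Left multiplication by `r` takes the first column `(a, c)` of `g` successively to
  -- `(u, c)`, `(u, 1)`, `(1, 1)` and `(1, 0)`.
  let r : SL(2, R) := transvection one_ne_zero (-1) *
    (transvection zero_ne_one (1 - (u : R)) * (transvection one_ne_zero ((1 - g 1 0) * ↑u⁻¹) *
      transvection zero_ne_one x))
  have hr : r ∈ H := H.mul_mem (hL _) (H.mul_mem (hU _) (H.mul_mem (hL _) (hU _)))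
  have h₀ : (r * g) 0 0 = 1 := by
    simp [r, mul_assoc, transvection_mul_apply_same, transvection_mul_apply_of_ne, ← hu]
  have h₁ : (r * g) 1 0 = 0 := by
    simp [r, mul_assoc, transvection_mul_apply_same, transvection_mul_apply_of_ne, ← hu]
  rw [← H.mul_mem_cancel_left hr, eq_transvection_of_first_column h₀ h₁]
  exact hU _

theorem tGen_eq_transvection (n : ℕ) : tGen n = transvection zero_ne_one 1 :=
  eq_transvection_of_first_column rfl rfl

/-- The element `s = [[1,0],[-1,1]]` of `SL(2, ℤ/nℤ)`, satisfying the braid relation with `t`. -/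
def sGen (n : ℕ) : SL2 n := transvection one_ne_zero (-1)

theorem sGen_mul_tGen_mul_sGen (n : ℕ) :
    sGen n * tGen n * sGen n = tGen n * sGen n * tGen n := by
  ext i j
  fin_cases i <;> fin_cases j <;>
    simp [sGen, tGen_eq_transvection, mul_assoc, transvection_mul_apply_same,
      transvection_mul_apply_of_ne, transvection_coe]

theorem closure_sGen_tGen (n : ℕ) [NeZero n] : Subgroup.closure {sGen n, tGen n} = ⊤ := by
  refine eq_top_of_transvection_mem
    (transvection_mem_of_transvection_one_mem _ ?_) (transvection_mem_of_transvection_one_mem _ ?_)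
  · rw [← tGen_eq_transvection]
    exact Subgroup.subset_closure (Set.mem_insert_of_mem _ rfl)
  · rw [← inv_mem_iff, transvection_inv]
    exact Subgroup.subset_closure (Set.mem_insert _ _)

end SL2

section Spectrum

variable {K A : Type*} [Field K] [Ring A] [Algebra K A] {x : A}

theorem isUnit_aeval_prod_X_sub_C {R A : Type*} [CommRing R] [IsDomain R] [Ring A] [Algebra R A]
    {x : A} {T : Finset R} (hT : ∀ r ∈ T, r ∉ spectrum R x) :
    IsUnit (aeval x (∏ r ∈ T, (X - C r))) := by
  by_contra h
  rw [← T.prod_map_val, ← roots_prod_X_sub_C T] at h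
  obtain ⟨k, hk, hroot⟩ := spectrum.exists_mem_of_not_isUnit_aeval_prod h
  simp only [eval_prod, eval_sub, eval_X, eval_C, Finset.prod_eq_zero_iff, sub_eq_zero] at hroot
  obtain ⟨r, hr, rfl⟩ := hroot
  exact hT _ hr hk

theorem aeval_prod_X_sub_C_eq_zero {p : K[X]} (hsplit : p.Splits) (hsep : p.Separable)
    (hp : aeval x p = 0) {S : Finset K} (hS : spectrum K x ⊆ S) :
    aeval x (∏ r ∈ S, (X - C r)) = 0 := by
  classical
  let T : Finset K := p.roots.toFinset \ S
  have hdvd : p ∣ (∏ r ∈ S, (X - C r)) * ∏ r ∈ T, (X - C r) := by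
    refine hsplit.dvd_of_roots_le_roots hsep.ne_zero ?_
    rw [← Finset.prod_union Finset.disjoint_sdiff, Finset.union_sdiff_self_eq_union,
      roots_prod_X_sub_C, Multiset.le_iff_subset (nodup_roots hsep)]
    exact fun r hr ↦ Finset.mem_union_right S (Multiset.mem_toFinset.mpr hr)
  have hT : IsUnit (aeval x (∏ r ∈ T, (X - C r))) :=
    isUnit_aeval_prod_X_sub_C fun r hr hmem ↦ (Finset.mem_sdiff.mp hr).2 (hS hmem)
  have hmul := aeval_eq_zero_of_dvd_aeval_eq_zero hdvd hp
  rwa [map_mul, hT.mul_left_eq_zero] at hmul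

theorem ne_algebraMap_of_one_lt_ncard_spectrum (hx : 1 < (spectrum K x).ncard) (c : K) :
    x ≠ algebraMap K A c := by
  rintro rfl
  rcases subsingleton_or_nontrivial A with _ | _
  · simp [spectrum.of_subsingleton] at hx
  · simp [spectrum.scalar_eq] at hx

theorem semiconjBy_aeval {R B : Type*} [CommSemiring R] [Semiring B] [Algebra R B] {u x y : B}
    (h : SemiconjBy u x y) (p : R[X]) : SemiconjBy u (aeval x p) (aeval y p) := by
  induction p using Polynomial.induction_on' with
  | add p q hp hq => simpa only [map_add] using hp.add_right hq
  | monomial k c =>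
    simpa only [aeval_monomial] using
      SemiconjBy.mul_right (Algebra.commutes c u).symm (h.pow_right k)

end Spectrum

section BraidRelation

variable {R M : Type*} [CommRing R] [AddCommGroup M] [Module R M] {A B : End R M} {a b : R}

theorem apply_sub_smul_of_aeval_eq_zero (hA : aeval A ((X - C a) * (X - C b)) = 0) (x : M) :
    A (A x - b • x) = a • (A x - b • x) := by
  rw [← sub_eq_zero]
  simpa using congr($hA x)

theorem span_eq_top_of_apply_mem_span
    (hirr : ∀ p ∈ A.invtSubmodule ⊓ B.invtSubmodule, p = ⊥ ∨ p = ⊤)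
    {s : Set M} {v : M} (hv : v ∈ s) (hv₀ : v ≠ 0)
    (hAs : ∀ x ∈ s, A x ∈ Submodule.span R s) (hBs : ∀ x ∈ s, B x ∈ Submodule.span R s) :
    Submodule.span R s = ⊤ := by
  refine (hirr _ ⟨Submodule.span_le.mpr hAs, Submodule.span_le.mpr hBs⟩).resolve_left fun h ↦ ?_
  exact hv₀ (Submodule.span_eq_bot.mp h v hv)

theorem eq_algebraMap_of_common_eigenvector
    (hirr : ∀ p ∈ A.invtSubmodule ⊓ B.invtSubmodule, p = ⊥ ∨ p = ⊤) {v : M} (hv : v ≠ 0)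
    (hAv : A v = a • v) (hBv : B v = b • v) : A = algebraMap R (End R M) a := by
  have hspan : R ∙ v = ⊤ := by
    refine span_eq_top_of_apply_mem_span hirr rfl hv ?_ ?_ <;> rintro _ rfl
    · exact Submodule.mem_span_singleton.mpr ⟨a, hAv.symm⟩
    · exact Submodule.mem_span_singleton.mpr ⟨b, hBv.symm⟩
  ext x
  obtain ⟨c, rfl⟩ := Submodule.mem_span_singleton.mp (hspan ▸ Submodule.mem_top : x ∈ R ∙ v)
  rw [map_smul, hAv, algebraMap_end_apply, smul_comm]

theorem apply_apply_sub_smul_of_braid (hbraid : A * B * A = B * A * B) {v : M} (hv : A v = a • v) :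
    B (A (B v - a • v)) = a • A (B v - a • v) - a ^ 2 • (B v - a • v) := by
  have hABA : A (B (A v)) = B (A (B v)) := congr($hbraid v)
  rw [hv] at hABA
  simp only [map_sub, map_smul, hv] at hABA ⊢
  rw [← hABA]
  module

theorem finrank_eq_two_of_braid {K V : Type*} [Field K] [AddCommGroup V] [Module K V]
    {A B : End K V} {a b : K} (hbraid : A * B * A = B * A * B)
    (hirr : ∀ p ∈ A.invtSubmodule ⊓ B.invtSubmodule, p = ⊥ ∨ p = ⊤)
    (hscalar : ∀ c, A ≠ algebraMap K (End K V) c)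
    (hA : aeval A ((X - C a) * (X - C b)) = 0) (hB : aeval B ((X - C a) * (X - C b)) = 0) :
    finrank K V = 2 := by
  obtain ⟨x, hv₀⟩ : ∃ x, A x - b • x ≠ 0 := by
    by_contra! h
    exact hscalar b (LinearMap.ext fun x ↦ sub_eq_zero.mp (h x))
  set v := A x - b • x
  have hAv : A v = a • v := apply_sub_smul_of_aeval_eq_zero hA x
  set w := B v - a • v
  have hBw : B w = b • w := apply_sub_smul_of_aeval_eq_zero (mul_comm (X - C a) _ ▸ hB) v
  have hBAw : B (A w) = a • A w - a ^ 2 • w := apply_apply_sub_smul_of_braid hbraid hAv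
  have hw₀ : w ≠ 0 := fun h ↦
    hscalar a (eq_algebraMap_of_common_eigenvector hirr hv₀ hAv (sub_eq_zero.mp h))
  have hli : LinearIndependent K ![w, A w] := by
    rw [LinearIndependent.pair_iff' hw₀]
    exact fun c hc ↦ hscalar c (eq_algebraMap_of_common_eigenvector hirr hw₀ hc.symm hBw)
  have hAAw : A (A w) = (a + b) • A w - (a * b) • w := by
    have h := apply_sub_smul_of_aeval_eq_zero hA w
    rw [map_sub, map_smul, sub_eq_iff_eq_add] at h
    rw [h]
    module
  have hspan : Submodule.span K {w, A w} = ⊤ := by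
    refine span_eq_top_of_apply_mem_span hirr (Set.mem_insert w _) hw₀ ?_ ?_ <;>
      rintro _ (rfl | rfl) <;> rw [Submodule.mem_span_pair]
    · exact ⟨0, 1, by module⟩
    · exact ⟨-(a * b), a + b, by rw [hAAw]; module⟩
    · exact ⟨b, 0, by rw [hBw]; module⟩
    · exact ⟨-a ^ 2, a, by rw [hBAw]; module⟩
  rw [← Matrix.range_cons_cons_empty w (A w) ![]] at hspan
  simpa using finrank_eq_card_basis (Basis.mk hli hspan.ge)

end BraidRelation

section Representation

theorem mem_invtSubmodule_of_closure_eq_top {K G V : Type*} [CommSemiring K] [Group G]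
    [AddCommMonoid V] [Module K V] (ρ : Representation K G V) {S : Set G}
    (hS : Subgroup.closure S = ⊤) (hfin : ∀ g ∈ S, IsOfFinOrder g) {p : Submodule K V}
    (hp : ∀ g ∈ S, p ∈ End.invtSubmodule (ρ g)) (g : G) : p ∈ End.invtSubmodule (ρ g) := by
  have hg : g ∈ Submonoid.closure S := by
    rw [← Subgroup.closure_toSubmonoid_of_isOfFinOrder hfin, hS]
    trivial
  induction hg using Submonoid.closure_induction with
  | mem g hg => exact hp g hg
  | one => simp only [map_one, End.invtSubmodule.one, Sublattice.mem_top]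
  | mul g h _ _ hg hh => rw [map_mul]; exact fun x hx ↦ hg (hh hx)

variable {K G V : Type*} [Field K] [Group G] [AddCommGroup V] [Module K V]

theorem eq_bot_or_eq_top_of_forall_mem_invtSubmodule (ρ : Representation K G V)
    [ρ.IsIrreducible] {p : Submodule K V} (hp : ∀ g, p ∈ End.invtSubmodule (ρ g)) :
    p = ⊥ ∨ p = ⊤ :=
  (eq_bot_or_eq_top (⟨p, fun g _ hv ↦ hp g hv⟩ : Subrepresentation ρ)).imp
    (congrArg Subrepresentation.toSubmodule) (congrArg Subrepresentation.toSubmodule)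

theorem IsIrreducibleRep.isIrreducible {G V : Type} [Group G] [AddCommGroup V] [Module ℂ V]
    {ρ : Representation ℂ G V} (h : IsIrreducibleRep ρ) : ρ.IsIrreducible where
  exists_pair_ne :=
    have := h.1
    ⟨⊥, ⊤, fun he ↦ bot_ne_top (congrArg Subrepresentation.toSubmodule he)⟩
  eq_bot_or_eq_top σ :=
    (h.2 σ.toSubmodule fun g ↦ Submodule.map_le_iff_le_comap.mpr (σ.apply_mem_toSubmodule g)).imp
      (fun he ↦ Subrepresentation.toSubmodule_injective he)
      (fun he ↦ Subrepresentation.toSubmodule_injective he)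

theorem stmt1_general [IsAlgClosed K] (ρ : Representation K G V) [ρ.IsIrreducible] {s t : G}
    (hclosure : Subgroup.closure {s, t} = ⊤) (hbraid : s * t * s = t * s * t)
    (ht : (orderOf t : K) ≠ 0) (h2 : (spectrum K (ρ t)).ncard = 2) : finrank K V = 2 := by
  classical
  obtain ⟨a, b, hab, hspec⟩ := Set.ncard_eq_two.mp h2
  have hconj : SemiconjBy (t * s) t s := by rw [SemiconjBy, ← hbraid, mul_assoc]
  have ht_fin : IsOfFinOrder t := by_contra fun h ↦ ht (by simp [orderOf_eq_zero h])
  have hs_fin : IsOfFinOrder s := by rwa [← orderOf_pos_iff, ← hconj.orderOf_eq, orderOf_pos_iff]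
  have hA : aeval (ρ t) ((X - C a) * (X - C b)) = 0 := by
    rw [← Finset.prod_pair (f := fun r ↦ X - C r) hab]
    refine aeval_prod_X_sub_C_eq_zero (IsAlgClosed.splits _)
      (separable_X_pow_sub_C 1 ht one_ne_zero) ?_ (by simp [hspec])
    rw [map_sub, map_pow, aeval_X, aeval_C, map_one, ← map_pow, pow_orderOf_eq_one, map_one,
      sub_self]
  have hB : aeval (ρ s) ((X - C a) * (X - C b)) = 0 := by
    have h := (semiconjBy_aeval (hconj.map ρ) ((X - C a) * (X - C b))).eq
    rwa [hA, mul_zero, eq_comm, ((Group.isUnit (t * s)).map ρ).mul_left_eq_zero] at h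
  refine finrank_eq_two_of_braid (by simp only [← map_mul, hbraid]) (fun p hp ↦ ?_)
    (ne_algebraMap_of_one_lt_ncard_spectrum (h2 ▸ one_lt_two)) hA hB
  refine eq_bot_or_eq_top_of_forall_mem_invtSubmodule ρ
    (mem_invtSubmodule_of_closure_eq_top ρ hclosure ?_ ?_)
  · rintro g (rfl | rfl) <;> assumption
  · rintro g (rfl | rfl)
    exacts [hp.2, hp.1]

end Representation

/-- If `ρ` is an irreducible finite-dimensional complex representation of `SL(2, ℤ/nℤ)`
and `ρ(t)` has exactly two distinct eigenvalues, then `ρ` is two-dimensional. -/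
theorem stmt1 (n : ℕ) (hn : 1 ≤ n)
    (V : Type) [AddCommGroup V] [Module ℂ V] [FiniteDimensional ℂ V]
    (ρ : Representation ℂ (SL2 n) V)
    (hirr : IsIrreducibleRep ρ)
    (h2 : (spectrum ℂ (ρ (tGen n))).ncard = 2) :
    Module.finrank ℂ V = 2 := by
  have := hirr.isIrreducible
  have : NeZero n := .of_pos hn
  exact stmt1_general ρ (closure_sGen_tGen n) (sGen_mul_tGen_mul_sGen n)
    (Nat.cast_ne_zero.mpr (orderOf_pos (tGen n)).ne') h2
end

section
/- Let n ≥ 1 be an integer and let ρ be an irreducible finite-dimensional complex representation of SL(2, ℤ/nℤ) such that ρ(t) has exactly two distinct eigenvalues ζ and ζ′. Then the ratio ζ′·ζ⁻¹ is a root of unity whose order is 2, 3, 4, or 5. -/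
/-!
Let `t'` be the lower triangular matrix with `t t' t = t' t t'`. Put `a = ρ(t)`, `b = ρ(t')` and
`x = a b⁻¹`. The braid relation makes `b` conjugate to `a`, so both satisfy `X² = s X - p` with
`s = z + z'` and `p = z z'`, whence `(a - b)³ = (s² - 3 p) (a - b)` and
`(a - b)² = p (x + x⁻¹ - 2)`. Therefore an eigenvalue `w ≠ 1` of `x` satisfies
`w + w⁻¹ = 1 + r + r⁻¹` with `r = z' / z`; such a `w` exists because `x` has finite order and
`a ≠ b`: as `t` and `t'` generate the group, `a = b` would be scalar by Schur's lemma. Both `r` and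
`w` are roots of unity. If `r` has order `m`, some Galois conjugation sends it to `exp (2πi/m)`, and
`1 + 2 cos (2π/m) < 2` forces `m < 6`.
-/

section SpecialLinear

open Matrix
open scoped MatrixGroups
open Matrix.SpecialLinearGroup (map map_apply_coe)

/- The lift is `[[1, ba], [0, 1]] * [[a, ad - 1], [1 - ad, d(2 - ad)]]`, whose second factor has
determinant identically `1` and reduces to the diagonal of `g`. -/
lemma sl2_exists_map_eq_of_lower_left_eq_zero {A B : Type*} [CommRing A] [CommRing B] {f : A →+* B}
    (hf : Function.Surjective f) {g : SL(2, B)} (hg : g 1 0 = 0) :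
    ∃ γ : SL(2, A), map f γ = g := by
  obtain ⟨a, ha⟩ := hf (g 0 0)
  obtain ⟨b, hb⟩ := hf (g 0 1)
  obtain ⟨d, hd⟩ := hf (g 1 1)
  have hdet : g 0 0 * g 1 1 = 1 := by
    have := g.det_coe
    rwa [det_fin_two, hg, mul_zero, sub_zero] at this
  obtain ⟨γ, hγ⟩ : ∃ γ : SL(2, A), (γ : Matrix (Fin 2) (Fin 2) A) =
      !![a + b * a * (1 - a * d), a * d - 1 + b * (a * (d * (1 + (1 - a * d))));
        1 - a * d, d * (1 + (1 - a * d))] :=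
    ⟨⟨_, by rw [det_fin_two_of]; ring⟩, rfl⟩
  refine ⟨γ, Matrix.SpecialLinearGroup.ext _ _ fun i j ↦ ?_⟩
  rw [map_apply_coe, RingHom.mapMatrix_apply, map_apply, hγ]
  fin_cases i <;> fin_cases j <;> simp [ha, hb, hd, hg, hdet]

theorem sl2_map_surjective_of_surjective {A B : Type*} [CommRing A] [IsDomain A] [IsBezout A]
    [CommRing B] {f : A →+* B} (hf : Function.Surjective f) :
    Function.Surjective (map f : SL(2, A) →* SL(2, B)) := by
  classical
  let := IsBezout.toGCDDomain A
  intro g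
  obtain ⟨x, hx⟩ := hf (g 0 0)
  obtain ⟨y, hy⟩ := hf (g 1 0)
  obtain ⟨x', y', hxx', hyy', hcoprime⟩ := extract_gcd x y
  obtain ⟨γ, hγ₀, hγ₁⟩ := ((gcd_isUnit_iff x' y').1 hcoprime).exists_SL2_col 0
  have hxy : x' * y - y' * x = 0 := by linear_combination x' * hyy' - y' * hxx'
  have hlower : ((map f γ)⁻¹ * g) 1 0 = 0 :=
    calc ((map f γ)⁻¹ * g) 1 0 = f (γ 0 0) * g 1 0 - f (γ 1 0) * g 0 0 := by
          rw [Matrix.SpecialLinearGroup.coe_mul, Matrix.SpecialLinearGroup.coe_inv,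
            adjugate_fin_two, map_apply_coe, mul_apply, Fin.sum_univ_two]
          simp [sub_eq_add_neg, add_comm]
      _ = f (x' * y - y' * x) := by rw [hγ₀, hγ₁, ← hx, ← hy, map_sub, map_mul, map_mul]
      _ = 0 := by rw [hxy, map_zero]
  obtain ⟨δ, hδ⟩ := sl2_exists_map_eq_of_lower_left_eq_zero hf hlower
  exact ⟨γ * δ, by rw [map_mul, hδ, mul_inv_cancel_left]⟩

/-- The conjugate `[[1,0],[-1,1]]` of `t` by `S = [[0,-1],[1,0]]`. It satisfies the braid relation
with `t`, and the two generate `SL(2, ℤ/nℤ)`. -/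
def lowerGen (n : ℕ) : SL2 n := ⟨!![1, 0; -1, 1], by simp [det_fin_two_of]⟩

variable (n : ℕ)

lemma coe_tGen : (tGen n : Matrix (Fin 2) (Fin 2) (ZMod n)) = !![1, 1; 0, 1] := rfl

lemma coe_lowerGen : (lowerGen n : Matrix (Fin 2) (Fin 2) (ZMod n)) = !![1, 0; -1, 1] := rfl

lemma tGen_mul_lowerGen_mul_tGen :
    tGen n * lowerGen n * tGen n = lowerGen n * tGen n * lowerGen n := by
  apply Subtype.ext
  simp [coe_tGen, coe_lowerGen]

lemma map_T_eq_tGen : map (Int.castRingHom (ZMod n)) ModularGroup.T = tGen n := by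
  ext i j
  rw [map_apply_coe, ModularGroup.coe_T, coe_tGen]
  fin_cases i <;> fin_cases j <;> simp

lemma map_S_eq_inv_tGen_mul_lowerGen_mul_tGen :
    map (Int.castRingHom (ZMod n)) ModularGroup.S = (tGen n * lowerGen n * tGen n)⁻¹ := by
  ext i j
  rw [map_apply_coe, ModularGroup.coe_S]
  fin_cases i <;> fin_cases j <;> simp [coe_tGen, coe_lowerGen, adjugate_fin_two]

theorem closure_tGen_lowerGen : Subgroup.closure {tGen n, lowerGen n} = ⊤ := by
  set H := Subgroup.closure {tGen n, lowerGen n}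
  have ht : tGen n ∈ H := Subgroup.subset_closure (by simp)
  have hl : lowerGen n ∈ H := Subgroup.subset_closure (by simp)
  have hsurj : Function.Surjective (map (Int.castRingHom (ZMod n)) : SL(2, ℤ) →* SL2 n) :=
    sl2_map_surjective_of_surjective ZMod.intCast_surjective
  rw [eq_top_iff, ← MonoidHom.range_eq_top.2 hsurj, MonoidHom.range_eq_map,
    ← SpecialLinearGroup.SL2Z_generators, MonoidHom.map_closure, Subgroup.closure_le,
    Set.image_pair, map_T_eq_tGen, map_S_eq_inv_tGen_mul_lowerGen_mul_tGen]
  exact Set.pair_subset (H.inv_mem (H.mul_mem (H.mul_mem ht hl) ht)) ht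

end SpecialLinear

lemma isIntegral_of_isOfFinOrder {A B : Type*} [CommRing A] [Ring B] [Algebra A B] {x : B}
    (hx : IsOfFinOrder x) : IsIntegral A x := by
  obtain ⟨N, hN, hxN⟩ := hx.exists_pow_eq_one
  exact .of_pow hN (hxN ▸ isIntegral_one)

section Conjugates

open Polynomial

lemma aeval_cyclotomic_of_isPrimitiveRoot {K : Type*} [Field K] [Algebra ℚ K] {m : ℕ}
    (hm : 0 < m) {r : K} (hr : IsPrimitiveRoot r m) : aeval r (cyclotomic m ℚ) = 0 := by
  rw [aeval_def, eval₂_eq_eval_map, map_cyclotomic]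
  exact hr.isRoot_cyclotomic hm

lemma exists_algHom_apply_eq_of_isPrimitiveRoot {K L : Type*} [Field K] [Algebra ℚ K]
    [Algebra.IsAlgebraic ℚ K] [Field L] [Algebra ℚ L] [IsAlgClosed L] {m : ℕ} (hm : 0 < m)
    {r : K} {ζ : L} (hr : IsPrimitiveRoot r m) (hζ : IsPrimitiveRoot ζ m) :
    ∃ φ : K →ₐ[ℚ] L, φ r = ζ := by
  refine IntermediateField.exists_algHom_of_splits_of_aeval
    (fun s ↦ ⟨Algebra.IsIntegral.isIntegral s, IsAlgClosed.splits _⟩) ?_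
  rw [← minpoly.eq_of_irreducible_of_monic (cyclotomic.irreducible_rat hm)
    (aeval_cyclotomic_of_isPrimitiveRoot hm hr) (cyclotomic.monic m ℚ)]
  exact aeval_cyclotomic_of_isPrimitiveRoot hm hζ

lemma re_lt_one_of_isOfFinOrder {w : ℂ} (hw : IsOfFinOrder w) (hw₁ : w ≠ 1) : w.re < 1 := by
  refine lt_of_le_of_ne (hw.norm_eq_one ▸ w.re_le_norm) fun hre ↦ hw₁ ?_
  have h := Complex.re_eq_norm.1 (hre.trans hw.norm_eq_one.symm)
  exact Complex.ext hre (Complex.le_def.1 h).2.symm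

lemma re_inv_of_isOfFinOrder {w : ℂ} (hw : IsOfFinOrder w) : (w⁻¹).re = w.re := by
  rw [RCLike.inv_eq_conj hw.norm_eq_one, Complex.conj_re]

lemma lt_six_of_cos_two_pi_div_lt {m : ℕ} (hm : Real.cos (2 * Real.pi / m) < 1 / 2) : m < 6 := by
  by_contra! hle
  have hle' : (6 : ℝ) ≤ m := by exact_mod_cast hle
  have hπ := Real.pi_pos
  have hangle : 2 * Real.pi / m ≤ Real.pi / 3 := by
    rw [div_le_div_iff₀ (by linarith) (by norm_num)]
    nlinarith
  have := Real.cos_le_cos_of_nonneg_of_le_pi (by positivity) (by linarith) hangle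
  rw [Real.cos_pi_div_three] at this
  linarith

lemma lt_six_of_one_add_add_inv_eq_add_inv {K : Type*} [Field K] [Algebra ℚ K]
    [Algebra.IsAlgebraic ℚ K] {m : ℕ} {r w : K} (hm : 0 < m) (hr : IsPrimitiveRoot r m)
    (hw : IsOfFinOrder w) (hw₁ : w ≠ 1) (h : 1 + r + r⁻¹ = w + w⁻¹) : m < 6 := by
  have hζ := Complex.isPrimitiveRoot_exp m hm.ne'
  obtain ⟨φ, hφ⟩ := exists_algHom_apply_eq_of_isPrimitiveRoot hm hr hζ
  have hre : (Complex.exp (2 * Real.pi * Complex.I / m)).re = Real.cos (2 * Real.pi / m) := by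
    rw [← Complex.exp_ofReal_mul_I_re]
    push_cast
    ring_nf
  apply lt_six_of_cos_two_pi_div_lt
  have hφw : IsOfFinOrder (φ w) := MonoidHom.isOfFinOrder (φ : K →* ℂ) hw
  have hφw_re := re_lt_one_of_isOfFinOrder hφw ((map_ne_one_iff φ φ.injective).2 hw₁)
  have hζ_fin := isOfFinOrder_iff_pow_eq_one.2 ⟨m, hm, hζ.pow_eq_one⟩
  have key := congr((φ $h).re)
  simp only [map_add, map_one, map_inv₀, hφ, Complex.add_re, Complex.one_re,
    re_inv_of_isOfFinOrder hζ_fin, re_inv_of_isOfFinOrder hφw, hre] at key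
  linarith

theorem orderOf_mem_of_one_add_add_inv_eq_add_inv {r w : ℂ} (hr : IsOfFinOrder r)
    (hr₁ : r ≠ 1) (hw : IsOfFinOrder w) (hw₁ : w ≠ 1) (h : 1 + r + r⁻¹ = w + w⁻¹) :
    orderOf r ∈ ({2, 3, 4, 5} : Set ℕ) := by
  have hpos := hr.orderOf_pos
  have hne_one : orderOf r ≠ 1 := mt orderOf_eq_one_iff.1 hr₁
  suffices orderOf r < 6 by
    simp only [Set.mem_insert_iff, Set.mem_singleton_iff]
    omega
  lift r to algebraicClosure ℚ ℂ using isIntegral_of_isOfFinOrder hr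
  lift w to algebraicClosure ℚ ℂ using isIntegral_of_isOfFinOrder hw
  have hinj : Function.Injective (algebraMap (algebraicClosure ℚ ℂ) ℂ) := RingHom.injective _
  have : Algebra.IsAlgebraic ℚ (algebraicClosure ℚ ℂ) := algebraicClosure.isAlgebraic ℚ ℂ
  refine lt_six_of_one_add_add_inv_eq_add_inv (r := r) hpos ?_ ?_ (by exact_mod_cast hw₁) ?_
  · exact (IsPrimitiveRoot.orderOf (r : ℂ)).of_map_of_injective hinj
  · exact (Function.Injective.isOfFinOrder_iff
      (f := (algebraMap (algebraicClosure ℚ ℂ) ℂ).toMonoidHom) hinj).1 hw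
  · exact hinj (by simpa using h)

end Conjugates

section Spectrum

open Polynomial

variable {K R : Type*} [Field K] [Ring R] [Algebra K R] {x : R} {μ : K}

lemma mem_spectrum_of_isRoot_minpoly (hx : IsIntegral K x) (hμ : (minpoly K x).IsRoot μ) :
    μ ∈ spectrum K x := by
  obtain ⟨q, hq⟩ := dvd_iff_isRoot.2 hμ
  have hmin := minpoly.ne_zero hx
  rw [hq] at hmin
  have hq_ne : aeval x q ≠ 0 := fun hq₀ ↦ by
    have := natDegree_le_of_dvd (minpoly.dvd K x hq₀) (right_ne_zero_of_mul hmin)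
    rw [hq, natDegree_mul (left_ne_zero_of_mul hmin) (right_ne_zero_of_mul hmin),
      natDegree_X_sub_C] at this
    omega
  rw [spectrum.mem_iff, IsUnit.sub_iff]
  intro hunit
  have hmul : (x - algebraMap K R μ) * aeval x q = 0 := by
    simpa [hq] using minpoly.aeval K x
  exact hq_ne (hunit.mul_right_eq_zero.1 hmul)

lemma nontrivial_of_mem_spectrum (hμ : μ ∈ spectrum K x) : Nontrivial R :=
  (subsingleton_or_nontrivial R).resolve_left fun _ ↦ by simp [spectrum.of_subsingleton] at hμ

lemma isOfFinOrder_of_mem_spectrum (hx : IsOfFinOrder x) (hμ : μ ∈ spectrum K x) :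
    IsOfFinOrder μ := by
  obtain ⟨N, hN, hxN⟩ := hx.exists_pow_eq_one
  have := nontrivial_of_mem_spectrum hμ
  have := spectrum.pow_mem_pow x N hμ
  rw [hxN, spectrum.one_eq] at this
  exact isOfFinOrder_iff_pow_eq_one.2 ⟨N, hN, this⟩

lemma eval_eq_zero_of_mem_spectrum {p : K[X]} (hp : aeval x p = 0) (hμ : μ ∈ spectrum K x) :
    p.eval μ = 0 := by
  have := nontrivial_of_mem_spectrum hμ
  have := spectrum.subset_polynomial_aeval x p ⟨μ, hμ, rfl⟩
  rwa [hp, spectrum.zero_eq] at this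

lemma aeval_eq_zero_of_isOfFinOrder [IsAlgClosed K] [CharZero K] (hx : IsOfFinOrder x)
    {p : K[X]} (hp : ∀ μ ∈ spectrum K x, p.IsRoot μ) : aeval x p = 0 := by
  obtain rfl | hp₀ := eq_or_ne p 0
  · exact map_zero _
  have hx_int : IsIntegral K x := isIntegral_of_isOfFinOrder hx
  have hsep : (minpoly K x).Separable := by
    obtain ⟨N, hN, hxN⟩ := hx.exists_pow_eq_one
    refine (separable_X_pow_sub_C (1 : K) (by exact_mod_cast hN.ne') one_ne_zero).of_dvd ?_
    exact minpoly.dvd K x (by simp [hxN])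
  refine aeval_eq_zero_of_dvd_aeval_eq_zero ?_ (minpoly.aeval K x)
  refine (IsAlgClosed.splits _).dvd_of_roots_le_roots (minpoly.ne_zero hx_int) ?_
  refine (Multiset.le_iff_subset (nodup_roots hsep)).2 fun μ hμ ↦ (mem_roots hp₀).2 ?_
  exact hp μ (mem_spectrum_of_isRoot_minpoly hx_int (isRoot_of_mem_roots hμ))

lemma exists_mem_spectrum_ne_one_of_isOfFinOrder (K : Type*) [Field K] [Algebra K R]
    [IsAlgClosed K] [CharZero K] (hx : IsOfFinOrder x) (hx₁ : x ≠ 1) :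
    ∃ w ∈ spectrum K x, w ≠ 1 := by
  by_contra! h
  have hone : aeval x (X - C 1 : K[X]) = 0 := aeval_eq_zero_of_isOfFinOrder hx fun μ hμ ↦ by
    simp [h μ hμ]
  rw [map_sub, aeval_X, aeval_C, map_one, sub_eq_zero] at hone
  exact hx₁ hone

lemma mul_self_eq_of_spectrum_eq_pair [IsAlgClosed K] [CharZero K] {z z' : K} (hx : IsOfFinOrder x)
    (hspec : spectrum K x = {z, z'}) : x * x = (z + z') • x - (z * z') • 1 := by
  have h : aeval x ((X - C z) * (X - C z')) = 0 := aeval_eq_zero_of_isOfFinOrder hx fun μ hμ ↦ by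
    rw [hspec] at hμ
    rcases hμ with rfl | rfl <;> simp
  simp only [map_mul, map_sub, aeval_X, aeval_C, Algebra.algebraMap_eq_smul_one, mul_sub, sub_mul,
    smul_mul_assoc, mul_smul_comm, mul_one, one_mul, smul_smul] at h
  rw [← sub_eq_zero, ← h]
  module

end Spectrum

section Braid

open Polynomial

lemma isConj_of_braid {G : Type*} [Group G] {a b : G} (h : a * b * a = b * a * b) : IsConj a b :=
  isConj_iff.2 ⟨a * b, by rw [h]; group⟩

section Quadratic

variable {K R : Type*} [CommRing K] [Ring R] [Algebra K R] {s p : K}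

lemma sub_pow_two_of_quadratic {a b : R} (ha : a * a = s • a - p • 1)
    (hb : b * b = s • b - p • 1) :
    (a - b) ^ 2 = s • (a + b) - (2 * p) • 1 - (a * b + b * a) := by
  rw [pow_two, sub_mul, mul_sub, mul_sub, ha, hb]
  module

lemma sub_pow_three_of_braid {a b : R} (ha : a * a = s • a - p • 1)
    (hb : b * b = s • b - p • 1) (h : a * b * a = b * a * b) :
    (a - b) ^ 3 = (s ^ 2 - 3 * p) • (a - b) := by
  have haab : a * a * b = s • (a * b) - p • b := by
    rw [ha, sub_mul, smul_mul_assoc, smul_mul_assoc, one_mul]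
  have hbba : b * b * a = s • (b * a) - p • a := by
    rw [hb, sub_mul, smul_mul_assoc, smul_mul_assoc, one_mul]
  calc (a - b) ^ 3
      = (a - b) * (s • (a + b) - (2 * p) • 1 - (a * b + b * a)) := by
        rw [pow_succ', sub_pow_two_of_quadratic ha hb]
    _ = s • (a * a + a * b - b * a - b * b) - (2 * p) • (a - b)
          - (a * a * b + a * b * a - b * a * b - b * b * a) := by
        simp only [mul_sub, sub_mul, mul_add, mul_smul_comm, mul_one, mul_assoc]
        module
    _ = (s ^ 2 - 3 * p) • (a - b) := by
        rw [h, haab, hbba, ha, hb]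
        module

lemma smul_mul_inv_of_quadratic (a : R) {b : Rˣ} (hb : (b * b : R) = s • (b : R) - p • 1) :
    p • (a * ↑b⁻¹) = s • a - a * b := by
  have hp : p • (↑b⁻¹ : R) = s • 1 - (b : R) := by
    have := congr($hb * ↑b⁻¹)
    simp only [sub_mul, smul_mul_assoc, one_mul, Units.mul_inv, Units.mul_inv_cancel_right] at this
    rw [this]
    module
  rw [← mul_smul_comm, hp, mul_sub, mul_smul_comm, mul_one]

lemma smul_mul_inv_sub_one_pow_three_of_braid {a b : Rˣ}
    (ha : (a * a : R) = s • (a : R) - p • 1) (hb : (b * b : R) = s • (b : R) - p • 1)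
    (h : a * b * a = b * a * b) :
    p • (↑(a * b⁻¹) - 1 : R) ^ 3 =
      (s ^ 2 - 3 * p) • (↑(a * b⁻¹) * (↑(a * b⁻¹) - 1) : R) := by
  set x := a * b⁻¹ with hx
  have hsq : (a - b : R) ^ 2 = p • (x + ↑x⁻¹ - 2 : R) := by
    have hxp : p • (x : R) = s • (a : R) - a * b := by
      simpa [hx] using smul_mul_inv_of_quadratic (a : R) hb
    have hxp' : p • (↑x⁻¹ : R) = s • (b : R) - b * a := by
      simpa [hx] using smul_mul_inv_of_quadratic (b : R) ha
    rw [sub_pow_two_of_quadratic ha hb, smul_sub, smul_add p, hxp, hxp',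
      ← one_add_one_eq_two (R := R)]
    module
  have hsub : (x - 1 : R) = (a - b) * ↑b⁻¹ := by simp [hx, sub_mul]
  have hcube := sub_pow_three_of_braid ha hb (by exact_mod_cast congr(($h : R)))
  have hx_sq : x * (x + ↑x⁻¹ - 2 : R) = (x - 1) ^ 2 := by
    rw [mul_sub, mul_add, Units.mul_inv]
    noncomm_ring
  calc p • (x - 1 : R) ^ 3
      = x * (p • (x + ↑x⁻¹ - 2 : R)) * (x - 1) := by
        rw [mul_smul_comm, hx_sq, smul_mul_assoc, ← pow_succ]
    _ = x * ((a - b : R) ^ 3) * ↑b⁻¹ := by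
        rw [← hsq, hsub, pow_succ _ 2]
        simp only [mul_assoc]
    _ = (s ^ 2 - 3 * p) • (x * (x - 1) : R) := by
        rw [hcube, hsub, mul_smul_comm, smul_mul_assoc, mul_assoc]

end Quadratic

lemma mul_sub_one_pow_two_of_mem_spectrum_of_braid {K R : Type*} [Field K] [Ring R] [Algebra K R]
    {s p w : K} {a b : Rˣ} (ha : (a * a : R) = s • (a : R) - p • 1)
    (hb : (b * b : R) = s • (b : R) - p • 1) (h : a * b * a = b * a * b)
    (hw : w ∈ spectrum K (↑(a * b⁻¹) : R)) (hw₁ : w ≠ 1) :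
    p * (w - 1) ^ 2 = (s ^ 2 - 3 * p) * w := by
  set x : R := ↑(a * b⁻¹)
  have hcube : p • (x - 1) ^ 3 = (s ^ 2 - 3 * p) • (x * (x - 1)) :=
    smul_mul_inv_sub_one_pow_three_of_braid ha hb h
  set P : K[X] := C p * (X - 1) ^ 3 - C (s ^ 2 - 3 * p) * (X * (X - 1)) with hP
  have hPx : aeval x P = 0 := by
    rw [hP, map_sub, map_mul, map_mul (aeval x) (C _), aeval_C, aeval_C, ← Algebra.smul_def,
      ← Algebra.smul_def, sub_eq_zero]
    simpa only [map_sub, map_mul, map_pow, map_one, aeval_X] using hcube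
  have hPw := eval_eq_zero_of_mem_spectrum hPx hw
  simp only [hP, eval_sub, eval_mul, eval_pow, eval_C, eval_X, eval_one] at hPw
  apply mul_left_cancel₀ (sub_ne_zero.2 hw₁)
  linear_combination hPw

theorem exists_mem_spectrum_mul_inv_of_braid {K R : Type*} [Field K] [IsAlgClosed K] [CharZero K]
    [Ring R] [Algebra K R] {a b : Rˣ} (hbraid : a * b * a = b * a * b) (hab : a ≠ b)
    (ha : IsOfFinOrder (a : R)) (hx : IsOfFinOrder (↑(a * b⁻¹) : R)) {z z' : K}
    (hspec : spectrum K (a : R) = {z, z'}) :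
    ∃ w ∈ spectrum K (↑(a * b⁻¹) : R), w ≠ 1 ∧ 1 + z' * z⁻¹ + (z' * z⁻¹)⁻¹ = w + w⁻¹ := by
  obtain ⟨w, hw, hw₁⟩ := exists_mem_spectrum_ne_one_of_isOfFinOrder K hx
    (Units.val_eq_one.not.2 (mul_inv_eq_one.not.2 hab))
  refine ⟨w, hw, hw₁, ?_⟩
  obtain ⟨c, hc⟩ := isConj_iff.1 (isConj_of_braid hbraid)
  have hspec_b : spectrum K (b : R) = {z, z'} := by
    rw [← hc, Units.val_mul, Units.val_mul, spectrum.units_conjugate, hspec]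
  have hb : IsOfFinOrder (b : R) := by
    rw [← hc, Units.isOfFinOrder_val]
    exact (MulAut.conj c).toMonoidHom.isOfFinOrder (Units.isOfFinOrder_val.1 ha)
  have hquad : z * z' * (w - 1) ^ 2 = ((z + z') ^ 2 - 3 * (z * z')) * w :=
    mul_sub_one_pow_two_of_mem_spectrum_of_braid (mul_self_eq_of_spectrum_eq_pair ha hspec)
      (mul_self_eq_of_spectrum_eq_pair hb hspec_b) hbraid hw hw₁
  have hz₀ : z ≠ 0 := spectrum.ne_zero_of_mem_of_unit (a := a) (by simp [hspec])
  have hz₀' : z' ≠ 0 := spectrum.ne_zero_of_mem_of_unit (a := a) (by simp [hspec])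
  have hw₀ : w ≠ 0 := spectrum.ne_zero_of_mem_of_unit hw
  field_simp
  linear_combination -hquad

end Braid

namespace IsIrreducibleRep

variable {G V : Type} [Group G] [AddCommGroup V] [Module ℂ V] [FiniteDimensional ℂ V]
  {ρ : Representation ℂ G V}

lemma exists_eq_algebraMap_of_commute (hρ : IsIrreducibleRep ρ) {f : Module.End ℂ V}
    (hf : ∀ g, Commute f (ρ g)) : ∃ c, f = algebraMap ℂ (Module.End ℂ V) c := by
  have := hρ.1
  obtain ⟨c, hc⟩ := Module.End.exists_eigenvalue f
  have htop : f.eigenspace c = ⊤ := (hρ.2 _ fun g ↦ Submodule.map_le_iff_le_comap.2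
    (Module.End.mapsTo_genEigenspace_of_comm (hf g) c 1)).resolve_left hc
  exact ⟨c, LinearMap.ext fun v ↦
    Module.End.mem_eigenspace_iff.1 (htop ▸ Submodule.mem_top : v ∈ f.eigenspace c)⟩

lemma toHomUnits_ne_of_closure_eq_top (hρ : IsIrreducibleRep ρ) {a b : G}
    (hgen : Subgroup.closure {a, b} = ⊤) (hspec : (spectrum ℂ (ρ a)).Nontrivial) :
    MonoidHom.toHomUnits ρ a ≠ MonoidHom.toHomUnits ρ b := by
  intro hab
  set C := (Subgroup.centralizer {MonoidHom.toHomUnits ρ a}).comap (MonoidHom.toHomUnits ρ)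
  have hC : C = ⊤ := by
    rw [eq_top_iff, ← hgen, Subgroup.closure_le]
    refine Set.pair_subset ?_ ?_ <;> simp [C, Subgroup.mem_centralizer_iff, hab]
  obtain ⟨c, hc⟩ := hρ.exists_eq_algebraMap_of_commute (f := ρ a) fun g ↦ by
    have hg : g ∈ C := hC ▸ Subgroup.mem_top g
    exact congr_arg Units.val (Subgroup.mem_centralizer_singleton_iff.1 hg).symm
  have := hρ.1
  rw [hc, spectrum.scalar_eq] at hspec
  exact Set.not_nontrivial_singleton hspec

end IsIrreducibleRep

theorem orderOf_mem_of_braid {R : Type*} [Ring R] [Algebra ℂ R] {a b : Rˣ}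
    (hbraid : a * b * a = b * a * b) (hab : a ≠ b) (ha : IsOfFinOrder (a : R))
    (hx : IsOfFinOrder (↑(a * b⁻¹) : R)) {z z' : ℂ} (hne : z ≠ z')
    (hspec : spectrum ℂ (a : R) = {z, z'}) : orderOf (z' * z⁻¹) ∈ ({2, 3, 4, 5} : Set ℕ) := by
  obtain ⟨w, hw, hw₁, hrel⟩ := exists_mem_spectrum_mul_inv_of_braid hbraid hab ha hx hspec
  have hz₀ : z ≠ 0 := spectrum.ne_zero_of_mem_of_unit (a := a) (by simp [hspec])
  have hz : IsOfFinOrder z := isOfFinOrder_of_mem_spectrum ha (by simp [hspec])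
  have hz' : IsOfFinOrder z' := isOfFinOrder_of_mem_spectrum ha (by simp [hspec])
  have hz_inv : IsOfFinOrder z⁻¹ := (invMonoidWithZeroHom : ℂ →*₀ ℂ).toMonoidHom.isOfFinOrder hz
  refine orderOf_mem_of_one_add_add_inv_eq_add_inv (hz'.mul hz_inv) ?_
    (isOfFinOrder_of_mem_spectrum hx hw) hw₁ hrel
  rwa [Ne, mul_inv_eq_one₀ hz₀, eq_comm]

theorem stmt5_general {G V : Type} [Group G] [AddCommGroup V] [Module ℂ V] [FiniteDimensional ℂ V]
    {ρ : Representation ℂ G V} (hirr : IsIrreducibleRep ρ) {a b : G}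
    (hgen : Subgroup.closure {a, b} = ⊤) (hbraid : a * b * a = b * a * b)
    (ha : IsOfFinOrder (ρ a)) (hx : IsOfFinOrder (ρ (a * b⁻¹))) {z z' : ℂ} (hne : z ≠ z')
    (hspec : spectrum ℂ (ρ a) = {z, z'}) : orderOf (z' * z⁻¹) ∈ ({2, 3, 4, 5} : Set ℕ) := by
  have hbraid_units := congr(MonoidHom.toHomUnits ρ $hbraid)
  simp only [map_mul] at hbraid_units
  refine orderOf_mem_of_braid hbraid_units ?_ ha ?_ hne hspec
  · exact hirr.toHomUnits_ne_of_closure_eq_top hgen (hspec ▸ Set.nontrivial_pair hne)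
  · rwa [← map_inv, ← map_mul, MonoidHom.coe_toHomUnits]

/-- If `ρ` is an irreducible finite-dimensional complex representation of `SL(2, ℤ/nℤ)`
whose `t`-spectrum consists of exactly two distinct eigenvalues `z` and `z'`, then the
ratio `z' * z⁻¹` is a root of unity of order `2`, `3`, `4`, or `5`. -/
theorem stmt5 (n : ℕ) (hn : 1 ≤ n)
    (V : Type) [AddCommGroup V] [Module ℂ V] [FiniteDimensional ℂ V]
    (ρ : Representation ℂ (SL2 n) V)
    (hirr : IsIrreducibleRep ρ)
    (z z' : ℂ) (hne : z ≠ z')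
    (hspec : spectrum ℂ (ρ (tGen n)) = {z, z'}) :
    orderOf (z' * z⁻¹) ∈ ({2, 3, 4, 5} : Set ℕ) := by
  have : NeZero n := ⟨by omega⟩
  exact stmt5_general hirr (closure_tGen_lowerGen n) (tGen_mul_lowerGen_mul_tGen n)
    (ρ.isOfFinOrder (isOfFinOrder_of_finite _))
    (ρ.isOfFinOrder (isOfFinOrder_of_finite _)) hne hspec
end

section
/- Every irreducible finite-dimensional complex representation ρ of SL(2, ℤ/9ℤ) that does not factor through the reduction homomorphism SL(2, ℤ/9ℤ) → SL(2, ℤ/3ℤ) has at least four distinct eigenvalues of ρ(t). -/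
/-!
Let `f` be a homomorphism on `SL(2, ℤ/9ℤ)` and `t` the standard unipotent. If `f (t ^ 3)` is
central, it is equal to the image of each of four conjugates of `t ^ 3` whose product is `1`; since
`t ^ 9 = 1`, this forces `f (t ^ 3) = 1`. The conjugates of powers of `t ^ 3` generate the kernel of
reduction modulo `3`, so `f` then factors through `SL(2, ℤ/3ℤ)`.

Otherwise `f t ^ 3` is not a scalar, so for every cube root of unity `c` some eigenvalue `l` of
`f t` has `l ^ 3 ≠ c`. Moreover `t` is conjugate to `t ^ (u ^ 2)` for every unit `u`, so the
spectrum is stable under `l ↦ l ^ 4` and `l ↦ l ^ 7`. An eigenvalue `l` with `l ^ 3 ≠ 1` is a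
primitive ninth root of unity and yields three eigenvalues with the same cube; a fourth has another
cube.
-/

open Matrix MatrixGroups Polynomial

section Lifting

variable {R S : Type*} [CommRing R] [CommRing S]

lemma isLocalHom_of_surjective_of_isNilpotent {φ : R →+* S} (hφ : Function.Surjective φ)
    (hnil : ∀ x ∈ RingHom.ker φ, IsNilpotent x) : IsLocalHom φ where
  map_nonunit x hx := by
    obtain ⟨s, hs⟩ := hx.exists_right_inv
    obtain ⟨y, rfl⟩ := hφ s
    have hker : x * y - 1 ∈ RingHom.ker φ := by
      rw [RingHom.mem_ker, map_sub, map_mul, hs, map_one, sub_self]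
    have hunit : IsUnit (x * y) := by
      simpa only [add_sub_cancel] using (hnil _ hker).isUnit_one_add
    exact isUnit_of_mul_isUnit_left hunit

lemma map_specialLinearGroup_surjective {ι : Type*} [Fintype ι] [DecidableEq ι]
    (φ : R →+* S) [IsLocalHom φ] (hφ : Function.Surjective φ) :
    Function.Surjective (Matrix.SpecialLinearGroup.map (n := ι) φ) := by
  intro B
  obtain hι | ⟨⟨i⟩⟩ := isEmpty_or_nonempty ι
  · exact ⟨1, Subsingleton.elim _ _⟩
  choose lift hlift using hφ
  let A : Matrix ι ι R := (B : Matrix ι ι S).map lift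
  have hA : φ.mapMatrix A = B := by
    ext
    simp only [A, RingHom.mapMatrix_apply, map_apply, hlift]
  have hdet : φ A.det = 1 := by rw [RingHom.map_det, hA, B.det_coe]
  obtain ⟨u, hu⟩ := isUnit_of_map_unit φ A.det (hdet ▸ isUnit_one)
  have hφu : φ ↑u⁻¹ = 1 := by
    rw [← mul_one (φ _), ← hdet, ← hu, ← map_mul, Units.inv_mul, hu, hdet, map_one]
  refine ⟨⟨A.updateRow i ((↑u⁻¹ : R) • A i), ?_⟩, ?_⟩
  · rw [det_updateRow_smul, updateRow_eq_self, ← hu, Units.inv_mul]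
  · ext j k
    have hAjk : φ (A j k) = B j k := congr_fun₂ hA j k
    change φ (A.updateRow i ((↑u⁻¹ : R) • A i) j k) = B j k
    obtain rfl | hj := eq_or_ne j i
    · rw [updateRow_self, Pi.smul_apply, smul_eq_mul, map_mul, hφu, one_mul, hAjk]
    · rw [updateRow_ne hj, hAjk]

lemma exists_eq_comp_of_ker_le {G H M : Type*} [Group G] [Group H] [Monoid M] {π : G →* H}
    (hπ : Function.Surjective π) {f : G →* M} (hf : π.ker ≤ f.ker) :
    ∃ f' : H →* M, f = f'.comp π := by
  let e := QuotientGroup.quotientKerEquivOfSurjective π hπ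
  refine ⟨(QuotientGroup.lift π.ker f hf).comp e.symm.toMonoidHom, MonoidHom.ext fun g => ?_⟩
  have he : e.symm (π g) = g := e.symm_apply_apply g
  simp [he]

lemma ker_castHom {d n : ℕ} (h : d ∣ n) :
    RingHom.ker (ZMod.castHom h (ZMod d)) = Ideal.span {(d : ZMod n)} := by
  ext x
  obtain ⟨k, rfl⟩ := ZMod.intCast_surjective x
  rw [RingHom.mem_ker, map_intCast, ZMod.intCast_zmod_eq_zero_iff_dvd, Ideal.mem_span_singleton]
  constructor
  · rintro ⟨m, rfl⟩
    exact ⟨m, by push_cast; rfl⟩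
  · rintro ⟨y, hy⟩
    have hcast := congrArg (ZMod.castHom h (ZMod d)) hy
    rw [map_mul, map_intCast, map_natCast, ZMod.natCast_self, zero_mul] at hcast
    exact (ZMod.intCast_zmod_eq_zero_iff_dvd _ _).mp hcast

end Lifting

section Infinitesimal

variable {R S M : Type*} [CommRing R] [CommRing S] [Monoid M] {a : R}

lemma isConj_of_mul_coe_eq {ι : Type*} [Fintype ι] [DecidableEq ι]
    {g h : Matrix.SpecialLinearGroup ι R} {P : Matrix ι ι R} (hP : P.det = 1)
    (hgh : P * g = h * P) : IsConj g h :=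
  isConj_iff.mpr ⟨⟨P, hP⟩, mul_inv_eq_iff_eq_mul.mpr (Subtype.ext hgh)⟩

/-- For `a ^ 2 = 0`, the element `1 + a • A` of `SL(2, R)`, where `A = !![x, y; z, -x]` is a
general traceless matrix. When `a` spans the kernel of a ring homomorphism, these elements form the
kernel of the induced homomorphism on `SL(2)`. -/
def infinitesimal (ha : a * a = 0) (x y z : R) : SL(2, R) :=
  ⟨!![1 + a * x, a * y; a * z, 1 - a * x], by
    rw [det_fin_two_of]
    linear_combination (-x * x - y * z) * ha⟩

lemma coe_infinitesimal (ha : a * a = 0) (x y z : R) :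
    (infinitesimal ha x y z : Matrix (Fin 2) (Fin 2) R) = !![1 + a * x, a * y; a * z, 1 - a * x] :=
  rfl

lemma infinitesimal_mul (ha : a * a = 0) (x y z x' y' z' : R) :
    infinitesimal ha x y z * infinitesimal ha x' y' z' =
      infinitesimal ha (x + x') (y + y') (z + z') := by
  apply Subtype.ext
  rw [Matrix.SpecialLinearGroup.coe_mul]
  simp only [coe_infinitesimal, mul_fin_two]
  congrm !![?_, ?_; ?_, ?_]
  · linear_combination (x * x' + y * z') * ha
  · linear_combination (x * y' - y * x') * ha
  · linear_combination (z * x' - x * z') * ha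
  · linear_combination (z * y' + x * x') * ha

lemma infinitesimal_mul_left_eq_one (ha : a * a = 0) {c : R} (hc : c * a = 0) (x y z : R) :
    infinitesimal ha (c * x) (c * y) (c * z) = 1 := by
  have hmul (t : R) : a * (c * t) = 0 := by rw [← mul_assoc, mul_comm a, hc, zero_mul]
  ext i j
  fin_cases i <;> fin_cases j <;> simp [coe_infinitesimal, hmul]

lemma isConj_infinitesimal_lower (ha : a * a = 0) (s y : R) :
    IsConj (infinitesimal ha 0 y 0) (infinitesimal ha (-s * y) y (-s ^ 2 * y)) := by
  refine isConj_of_mul_coe_eq (P := !![1, 0; s, 1]) (by simp) ?_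
  ext i j
  fin_cases i <;> fin_cases j <;> simp [coe_infinitesimal] <;> ring

lemma isConj_infinitesimal_swap (ha : a * a = 0) (y : R) :
    IsConj (infinitesimal ha 0 y 0) (infinitesimal ha 0 0 (-y)) := by
  refine isConj_of_mul_coe_eq (P := !![0, -1; 1, 0]) (by simp) ?_
  ext i j
  fin_cases i <;> fin_cases j <;> simp [coe_infinitesimal]

lemma map_infinitesimal_eq_one {f : SL(2, R) →* M} (ha : a * a = 0)
    (hf : ∀ y, f (infinitesimal ha 0 y 0) = 1) (x y z : R) : f (infinitesimal ha x y z) = 1 := by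
  have hlower := f.map_isConj (isConj_infinitesimal_lower ha 1 (-x))
  have hswap := f.map_isConj (isConj_infinitesimal_swap ha (x - z))
  rw [hf, isConj_one_right] at hlower hswap
  have hdecomp : infinitesimal ha x y z = infinitesimal ha 0 (x + y) 0 *
      infinitesimal ha (-1 * -x) (-x) (-1 ^ 2 * -x) * infinitesimal ha 0 0 (-(x - z)) := by
    simp only [infinitesimal_mul]
    congr 1 <;> ring
  rw [hdecomp, map_mul, map_mul, hf, hlower, hswap, one_mul, one_mul]

-- Since `3 * a = 0`, the conjugates of `infinitesimal ha 0 y 0` by `!![1, 0; s, 1]` for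
-- `s = 0, 1, -1` and by `!![0, -1; 1, 0]` have product `1`, so a central value `c` satisfies
-- `c ^ 4 = 1` as well as `c ^ 3 = 1`.
lemma map_infinitesimal_eq_one_of_mem_center {f : SL(2, R) →* M} (ha : a * a = 0)
    (h3 : 3 * a = 0) {y : R} (hf : f (infinitesimal ha 0 y 0) ∈ Set.center M) :
    f (infinitesimal ha 0 y 0) = 1 := by
  let u := infinitesimal ha 0 y 0
  have hconj {g : SL(2, R)} (hg : IsConj u g) : f u = f g :=
    (f.map_isConj hg).eq_of_left_mem_center hf
  have hcube : f u ^ 3 = 1 := by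
    have hu : u ^ 3 = infinitesimal ha (3 * 0) (3 * y) (3 * 0) := by
      simp only [u, pow_three, infinitesimal_mul]
      congr 1 <;> ring
    rw [← map_pow, hu, infinitesimal_mul_left_eq_one ha h3, map_one]
  have hprod : u * infinitesimal ha (-1 * y) y (-1 ^ 2 * y) *
      infinitesimal ha (-(-1) * y) y (-(-1) ^ 2 * y) * infinitesimal ha 0 0 (-y) = 1 := by
    rw [← infinitesimal_mul_left_eq_one ha h3 0 y (-y)]
    simp only [u, infinitesimal_mul]
    congr 1 <;> ring
  have hfourth : f u ^ 3 * f u = 1 := by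
    rw [← map_one f, ← hprod, map_mul, map_mul, map_mul,
      ← hconj (isConj_infinitesimal_lower ha 1 y), ← hconj (isConj_infinitesimal_lower ha (-1) y),
      ← hconj (isConj_infinitesimal_swap ha y), pow_succ, pow_two]
  rwa [hcube, one_mul] at hfourth

lemma exists_infinitesimal_of_mem_ker {φ : R →+* S} (ha : a * a = 0)
    (hker : RingHom.ker φ = Ideal.span {a}) {g : SL(2, R)}
    (hg : g ∈ (Matrix.SpecialLinearGroup.map φ).ker) : ∃ x y z, g = infinitesimal ha x y z := by
  have hmap : φ.mapMatrix ((g : Matrix (Fin 2) (Fin 2) R) - 1) = 0 := by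
    rw [map_sub, map_one, sub_eq_zero]
    exact congrArg (fun h : SL(2, S) => (h : Matrix (Fin 2) (Fin 2) S)) (MonoidHom.mem_ker.mp hg)
  have hdvd (i j : Fin 2) : a ∣ ((g : Matrix (Fin 2) (Fin 2) R) - 1) i j := by
    rw [← Ideal.mem_span_singleton, ← hker, RingHom.mem_ker]
    exact congr_fun₂ hmap i j
  choose B hB using hdvd
  have hg_coe : (g : Matrix (Fin 2) (Fin 2) R) = 1 + a • of B := by
    rw [← sub_eq_iff_eq_add']
    exact Matrix.ext hB
  have hdet : (1 + a * B 0 0) * (1 + a * B 1 1) - a * B 0 1 * (a * B 1 0) = 1 := by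
    simpa [hg_coe, det_fin_two] using g.det_coe
  refine ⟨B 0 0, B 0 1, B 1 0, Subtype.ext ?_⟩
  have htrace : 1 + a * B 1 1 = 1 - a * B 0 0 := by
    linear_combination hdet - (B 0 0 * B 1 1 - B 0 1 * B 1 0) * ha
  rw [hg_coe, coe_infinitesimal, ← htrace]
  ext i j
  fin_cases i <;> fin_cases j <;> simp

lemma exists_eq_comp_map_of_infinitesimal {φ : R →+* S} (hφ : Function.Surjective φ)
    (ha : a * a = 0) (hker : RingHom.ker φ = Ideal.span {a}) {f : SL(2, R) →* M}
    (hf : ∀ y, f (infinitesimal ha 0 y 0) = 1) :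
    ∃ f' : SL(2, S) →* M, f = f'.comp (Matrix.SpecialLinearGroup.map φ) := by
  have hlocal : IsLocalHom φ := isLocalHom_of_surjective_of_isNilpotent hφ fun x hx => by
    obtain ⟨r, rfl⟩ := Ideal.mem_span_singleton.mp (hker ▸ hx)
    exact ⟨2, by rw [mul_pow, pow_two a, ha, zero_mul]⟩
  refine exists_eq_comp_of_ker_le (map_specialLinearGroup_surjective φ hφ) fun g hg => ?_
  obtain ⟨x, y, z, rfl⟩ := exists_infinitesimal_of_mem_ker ha hker hg
  exact map_infinitesimal_eq_one ha hf x y z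

end Infinitesimal

section Unipotent

variable {n : ℕ}

lemma coe_tGen_pow (k : ℕ) : (tGen n ^ k : SL2 n) = !![1, (k : ZMod n); 0, 1] := by
  induction k with
  | zero => simp [one_fin_two]
  | succ k ih =>
    rw [pow_succ, Matrix.SpecialLinearGroup.coe_mul, ih]
    simp [tGen, add_comm]

lemma tGen_pow_self : tGen n ^ n = 1 := by
  apply Subtype.ext
  rw [coe_tGen_pow, ZMod.natCast_self, Matrix.SpecialLinearGroup.coe_one, one_fin_two]

lemma tGen_pow_mul_eq_infinitesimal {d : ℕ} (hd : (d : ZMod n) * d = 0) (k : ℕ) :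
    tGen n ^ (d * k) = infinitesimal hd 0 k 0 := by
  apply Subtype.ext
  simp [coe_tGen_pow, coe_infinitesimal, -Matrix.SpecialLinearGroup.coe_pow]

lemma isConj_tGen_pow {k : ℕ} (u : (ZMod n)ˣ) (hk : (k : ZMod n) = u ^ 2) :
    IsConj (tGen n) (tGen n ^ k) := by
  refine isConj_of_mul_coe_eq (P := !![↑u, 0; 0, ↑u⁻¹]) (by simp) ?_
  rw [coe_tGen_pow, hk]
  simp [tGen, pow_two, mul_assoc]

end Unipotent

lemma exists_eq_comp_of_map_tGen_pow_three_mem_center {M : Type*} [Monoid M] {f : SL2 9 →* M}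
    (hf : f (tGen 9 ^ 3) ∈ Set.center M) :
    ∃ f' : SL2 3 →* M, f = f'.comp (Matrix.SpecialLinearGroup.map
      (ZMod.castHom (by norm_num : (3 : ℕ) ∣ 9) (ZMod 3))) := by
  have hsq : ((3 : ℕ) : ZMod 9) * (3 : ℕ) = 0 := by decide
  have htriv : f (tGen 9 ^ 3) = 1 := by
    have hpow := tGen_pow_mul_eq_infinitesimal hsq 1
    rw [mul_one] at hpow
    rw [hpow] at hf ⊢
    exact map_infinitesimal_eq_one_of_mem_center hsq (by decide) hf
  refine exists_eq_comp_map_of_infinitesimal (ZMod.castHom_surjective _) hsq (ker_castHom _)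
    fun y => ?_
  rw [← ZMod.natCast_zmod_val y, ← tGen_pow_mul_eq_infinitesimal, pow_mul, map_pow, htriv, one_pow]

section Spectrum

variable {K A : Type*} [Field K] [Ring A] [Algebra K A] {T : A}

lemma exists_mem_spectrum_eval_ne_zero {p q : K[X]} (hq : q.Splits) (hq0 : q ≠ 0)
    (hpq : IsCoprime p q) (hT : aeval T (p * q) = 0) (hp : aeval T p ≠ 0) :
    ∃ l ∈ spectrum K T, p.eval l ≠ 0 := by
  by_contra! hroot
  have hunit : IsUnit (aeval T q) := by
    rw [hq.eq_prod_roots, map_mul, aeval_C]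
    refine ((isUnit_iff_ne_zero.mpr (leadingCoeff_ne_zero.mpr hq0)).map (algebraMap K A)).mul ?_
    by_contra hprod
    obtain ⟨l, hl, hql⟩ := spectrum.exists_mem_of_not_isUnit_aeval_prod hprod
    obtain ⟨r, s, hrs⟩ := hpq
    simpa [hroot l hl, hql] using congrArg (eval l) hrs
  rw [map_mul, hunit.mul_left_eq_zero] at hT
  exact hp hT

lemma pow_eq_one_of_mem_spectrum {n : ℕ} (hT : T ^ n = 1) {l : K} (hl : l ∈ spectrum K T) :
    l ^ n = 1 := by
  have hmem := spectrum.pow_mem_pow T n hl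
  rw [hT] at hmem
  have : Nontrivial A := by
    by_contra hA
    rw [not_nontrivial_iff_subsingleton] at hA
    simp [spectrum.of_subsingleton] at hl
  simpa [spectrum.one_eq] using hmem

lemma exists_mem_spectrum_pow_ne {k m : ℕ} [NeZero (k * m)] {ζ : K}
    (hζ : IsPrimitiveRoot ζ (k * m)) (hT : T ^ (k * m) = 1) {c : K} (hc : c ^ m = 1)
    (hTc : T ^ k ≠ algebraMap K A c) : ∃ l ∈ spectrum K T, l ^ k ≠ c := by
  have hdvd : (X ^ k - C c : K[X]) ∣ X ^ (k * m) - 1 := by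
    simpa only [← pow_mul, ← C_pow, hc, C_1] using sub_dvd_pow_sub_pow (X ^ k) (C c) m
  obtain ⟨q, hq⟩ := hdvd
  have hsep : (X ^ (k * m) - 1 : K[X]).Separable :=
    X_pow_sub_one_separable_iff.mpr hζ.neZero'.out
  have hsplits : (X ^ (k * m) - 1 : K[X]).Splits := X_pow_sub_one_splits hζ
  have hqdvd : q ∣ X ^ (k * m) - 1 := hq ▸ dvd_mul_left _ _
  have hcop : IsCoprime (X ^ k - C c) q := (hq ▸ hsep).isCoprime
  have haeval : aeval T ((X ^ k - C c) * q) = 0 := by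
    rw [← hq]
    simp [hT]
  obtain ⟨l, hl, hne⟩ := exists_mem_spectrum_eval_ne_zero (hsplits.of_dvd hsep.ne_zero hqdvd)
    (ne_zero_of_dvd_ne_zero hsep.ne_zero hqdvd) hcop haeval (by simpa [sub_eq_zero] using hTc)
  exact ⟨l, hl, by simpa [sub_eq_zero] using hne⟩

lemma pow_mem_spectrum_of_isConj {k : ℕ} (hT : IsConj T (T ^ k)) {l : K}
    (hl : l ∈ spectrum K T) : l ^ k ∈ spectrum K T := by
  obtain ⟨u, hu⟩ := hT
  have hpow : T ^ k = u * T * ↑u⁻¹ := by rw [hu.eq, Units.mul_inv_cancel_right]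
  rw [← spectrum.units_conjugate (u := u), ← hpow]
  exact spectrum.pow_mem_pow T k hl

end Spectrum

lemma four_le_ncard_of_pow_mem {R : Type*} [CommRing R] [IsDomain R] {s : Set R}
    (hs : ∀ x ∈ s, x ^ 9 = 1) {l m : R} (hl : ∀ k ∈ ({1, 4, 7} : Finset ℕ), l ^ k ∈ s)
    (hl3 : l ^ 3 ≠ 1) (hm : m ∈ s) (hml : m ^ 3 ≠ l ^ 3) : 4 ≤ s.ncard := by
  classical
  have hl9 : l ^ 9 = 1 := hs l (by simpa using hl 1 (by decide))
  have hprim : IsPrimitiveRoot l 9 :=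
    IsPrimitiveRoot.iff_orderOf.mpr (orderOf_eq_prime_pow (p := 3) (n := 1) hl3 hl9)
  let t : Finset R := ({1, 4, 7} : Finset ℕ).image (l ^ ·)
  have hlt : ∀ k ∈ ({1, 4, 7} : Finset ℕ), k < 9 := by decide
  have hcard : t.card = 3 :=
    Finset.card_image_of_injOn fun i hi j hj => hprim.pow_inj (hlt i hi) (hlt j hj)
  have hmod : ∀ k ∈ ({1, 4, 7} : Finset ℕ), ∃ i < 3, k * 3 = 3 + 9 * i := by decide
  have hcube : ∀ x ∈ t, x ^ 3 = l ^ 3 := by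
    intro x hx
    obtain ⟨k, hk, rfl⟩ := Finset.mem_image.mp hx
    obtain ⟨i, -, hi⟩ := hmod k hk
    rw [← pow_mul, hi, pow_add, pow_mul, hl9, one_pow, mul_one]
  have hmt : m ∉ t := fun h => hml (hcube m h)
  have hsub : (↑(insert m t) : Set R) ⊆ s := by
    rw [Finset.coe_insert, Set.insert_subset_iff]
    refine ⟨hm, fun x hx => ?_⟩
    obtain ⟨k, hk, rfl⟩ := Finset.mem_image.mp hx
    exact hl k hk
  have hfin : s.Finite := (nthRootsFinset 9 (1 : R)).finite_toSet.subset fun x hx =>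
    (mem_nthRootsFinset (by norm_num) 1).mpr (hs x hx)
  calc 4 = (insert m t).card := by rw [Finset.card_insert_of_notMem hmt, hcard]
    _ = (↑(insert m t) : Set R).ncard := (Set.ncard_coe_finset _).symm
    _ ≤ s.ncard := Set.ncard_le_ncard hsub hfin

theorem stmt6_general {K A : Type*} [Field K] [Ring A] [Algebra K A] {ζ : K}
    (hζ : IsPrimitiveRoot ζ 9) (f : SL2 9 →* A)
    (hnf : ¬ ∃ f' : SL2 3 →* A, f = f'.comp (Matrix.SpecialLinearGroup.map
      (ZMod.castHom (by norm_num : (3 : ℕ) ∣ 9) (ZMod 3)))) :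
    4 ≤ (spectrum K (f (tGen 9))).ncard := by
  have hT : f (tGen 9) ^ 9 = 1 := by rw [← map_pow, tGen_pow_self, map_one]
  have hnot_scalar (c : K) : f (tGen 9) ^ 3 ≠ algebraMap K A c := fun hc =>
    hnf <| exists_eq_comp_of_map_tGen_pow_three_mem_center <| by
      rw [map_pow, hc]
      exact Set.algebraMap_mem_center c
  have hroot : ∀ l ∈ spectrum K (f (tGen 9)), l ^ 9 = 1 := fun l hl =>
    pow_eq_one_of_mem_spectrum hT hl
  have hexists (c : K) (hc : c ^ 3 = 1) : ∃ l ∈ spectrum K (f (tGen 9)), l ^ 3 ≠ c :=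
    exists_mem_spectrum_pow_ne (k := 3) (m := 3) hζ hT hc (hnot_scalar c)
  have hsquare : ∀ k ∈ ({1, 4, 7} : Finset ℕ), ∃ u : (ZMod 9)ˣ, (k : ZMod 9) = u ^ 2 := by decide
  have hpow {l : K} (hl : l ∈ spectrum K (f (tGen 9))) :
      ∀ k ∈ ({1, 4, 7} : Finset ℕ), l ^ k ∈ spectrum K (f (tGen 9)) := fun k hk => by
    obtain ⟨u, hu⟩ := hsquare k hk
    have hconj := f.map_isConj (isConj_tGen_pow u hu)
    rw [map_pow] at hconj
    exact pow_mem_spectrum_of_isConj hconj hl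
  obtain ⟨l, hl, hl3⟩ := hexists 1 (one_pow 3)
  obtain ⟨m, hm, hml⟩ := hexists (l ^ 3) (by rw [← pow_mul]; exact hroot l hl)
  exact four_le_ncard_of_pow_mem hroot (hpow hl) hl3 hm hml

/-- Every irreducible finite-dimensional complex representation of `SL(2, ℤ/9ℤ)` that does
not factor through the reduction homomorphism `SL(2, ℤ/9ℤ) → SL(2, ℤ/3ℤ)` has at least four
distinct eigenvalues of `ρ(t)`. -/
theorem stmt6
    (V : Type) [AddCommGroup V] [Module ℂ V] [FiniteDimensional ℂ V]
    (ρ : Representation ℂ (SL2 9) V)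
    (hirr : IsIrreducibleRep ρ)
    (hnf : ¬ ∃ ρ' : Representation ℂ (SL2 3) V,
      ρ = ρ'.comp (Matrix.SpecialLinearGroup.map
        (ZMod.castHom (by norm_num : (3:ℕ) ∣ 9) (ZMod 3)))) :
    4 ≤ (spectrum ℂ (ρ (tGen 9))).ncard := by
  exact stmt6_general (Complex.isPrimitiveRoot_exp 9 (by norm_num)) ρ hnf
end
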